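/- Lower bound on the lower-value SDP (Proposition 3, lower half): assume P* is a symmetric n×n matrix with 𝓡(P*) = 0, and set L* = γ⁻²B_wᵀP*. Fix x_0 ∈ ℝⁿ. Then every symmetric positive semidefinite (n+m)×(n+m) matrix Z, partitioned into blocks Z₁₁ (n×n), Z₁₂ (n×m), Z₂₂ (m×m), that satisfies x_0x_0ᵀ + (A+B_wL*)Z₁₁ + BZ₁₂ᵀ + Z₁₁(A+B_wL*)ᵀ + Z₁₂Bᵀ = 0 obeys Tr((Q − γ²(L*)ᵀL*) Z₁₁) + Tr(R Z₂₂) ≥ x_0ᵀP*x_0. -/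

import Mathlib

open Matrix

/-- Lower bound on the lower-value SDP (Proposition 3, lower half). -/
theorem lower_value_sdp_bound {n m p : ℕ}
    (A : Matrix (Fin n) (Fin n) ℝ) (B : Matrix (Fin n) (Fin m) ℝ)
    (Bw : Matrix (Fin n) (Fin p) ℝ)
    (Q : Matrix (Fin n) (Fin n) ℝ) (hQ : Q.IsSymm)
    (R : Matrix (Fin m) (Fin m) ℝ) (hR : R.PosDef) (hRsymm : R.IsSymm)
    (γ : ℝ) (hγ : 0 < γ)
    (Ps : Matrix (Fin n) (Fin n) ℝ) (hPs : Ps.IsSymm)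
    (hARE : Aᵀ * Ps + Ps * A + Q - Ps * B * R⁻¹ * Bᵀ * Ps
      + (γ ^ 2)⁻¹ • (Ps * Bw * Bwᵀ * Ps) = 0)
    (x0 : Fin n → ℝ)
    (Z₁₁ : Matrix (Fin n) (Fin n) ℝ) (Z₁₂ : Matrix (Fin n) (Fin m) ℝ)
    (Z₂₂ : Matrix (Fin m) (Fin m) ℝ)
    (hZ : (fromBlocks Z₁₁ Z₁₂ Z₁₂ᵀ Z₂₂).PosSemidef)
    (hfeas : vecMulVec x0 x0
      + (A + Bw * ((γ ^ 2)⁻¹ • (Bwᵀ * Ps))) * Z₁₁ + B * Z₁₂ᵀ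
      + Z₁₁ * (A + Bw * ((γ ^ 2)⁻¹ • (Bwᵀ * Ps)))ᵀ + Z₁₂ * Bᵀ = 0) :
    x0 ⬝ᵥ Ps *ᵥ x0 ≤
      ((Q - γ ^ 2 • (((γ ^ 2)⁻¹ • (Bwᵀ * Ps))ᵀ * ((γ ^ 2)⁻¹ • (Bwᵀ * Ps)))) * Z₁₁).trace
        + (R * Z₂₂).trace := by
  set K : Matrix (Fin m) (Fin n) ℝ := R⁻¹ * Bᵀ * Ps with hK
  set M : Matrix (Fin m) (Fin m) ℝ := K * Z₁₁ * Kᵀ + K * Z₁₂ + Z₁₂ᵀ * Kᵀ + Z₂₂ with hM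
  have hMpsd : M.PosSemidef := by
    have h := hZ.mul_mul_conjTranspose_same (fromCols K (1 : Matrix (Fin m) (Fin m) ℝ))
    convert h using 1
    rw [conjTranspose_eq_transpose_of_trivial, transpose_fromCols, fromCols_mul_fromBlocks,
      fromCols_mul_fromRows, hM]
    simp only [Matrix.one_mul, Matrix.mul_one, transpose_one, Matrix.add_mul]
    abel
  have htr : 0 ≤ (R * M).trace := by
    obtain ⟨C, hC⟩ : ∃ C : Matrix (Fin m) (Fin m) ℝ, R = Cᴴ * C := by
      open scoped MatrixOrder in
      exact CStarAlgebra.nonneg_iff_eq_star_mul_self.mp hR.posSemidef.nonneg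
    have h := (hMpsd.mul_mul_conjTranspose_same C).trace_nonneg
    rw [hC, Matrix.mul_assoc, Matrix.trace_mul_comm]
    exact h
  have hdet : IsUnit R.det := (Matrix.isUnit_iff_isUnit_det _).mp hR.isUnit
  have hRK : R * K = Bᵀ * Ps := by
    rw [hK, Matrix.mul_assoc, Matrix.mul_nonsing_inv_cancel_left _ _ hdet]
  have hKR : Kᵀ * R = Ps * B := by
    have := congrArg transpose hRK
    simpa [transpose_mul, hRsymm.eq, hPs.eq] using this
  have hγ2 : γ ^ 2 ≠ 0 := by positivity
  set W : Matrix (Fin n) (Fin n) ℝ := (γ ^ 2)⁻¹ • (Ps * Bw * Bwᵀ * Ps) with hW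
  have hLL : γ ^ 2 • (((γ ^ 2)⁻¹ • (Bwᵀ * Ps))ᵀ * ((γ ^ 2)⁻¹ • (Bwᵀ * Ps))) = W := by
    rw [hW]
    simp only [transpose_smul, transpose_mul, transpose_transpose, hPs.eq, Matrix.smul_mul,
      Matrix.mul_smul, Matrix.mul_assoc]
    rw [smul_inv_smul₀ hγ2]
  rw [hLL]
  set F : Matrix (Fin n) (Fin n) ℝ := A + Bw * ((γ ^ 2)⁻¹ • (Bwᵀ * Ps)) with hF
  have hPF : Ps * F = Ps * A + W := by
    rw [hF, hW]
    simp only [Matrix.mul_add, Matrix.mul_smul, Matrix.mul_assoc]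
  have hFP : Fᵀ * Ps = Aᵀ * Ps + W := by
    rw [hF, hW]
    simp only [transpose_add, transpose_smul, transpose_mul, transpose_transpose, hPs.eq,
      Matrix.add_mul, Matrix.smul_mul, Matrix.mul_smul, Matrix.mul_assoc]
  have hQW : Q - W = Kᵀ * R * K - Ps * F - Fᵀ * Ps := by
    rw [hKR, hPF, hFP]
    have h2 : Ps * B * K = Ps * B * R⁻¹ * Bᵀ * Ps := by
      rw [hK]; simp only [Matrix.mul_assoc]
    rw [h2, ← sub_eq_zero, ← hARE]
    abel
  have hx : (Ps * vecMulVec x0 x0).trace = x0 ⬝ᵥ Ps *ᵥ x0 := by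
    rw [Matrix.mul_vecMulVec, Matrix.trace_vecMulVec, dotProduct_comm]
  have hf := congrArg (fun X => (Ps * X).trace) hfeas
  simp only [Matrix.mul_add, Matrix.trace_add, Matrix.mul_zero, Matrix.trace_zero, hx] at hf
  have e1 : (Ps * (Z₁₁ * Fᵀ)).trace = (Fᵀ * Ps * Z₁₁).trace := by
    rw [← Matrix.mul_assoc, Matrix.trace_mul_comm, Matrix.mul_assoc]
  have e2 : (Ps * (Z₁₂ * Bᵀ)).trace = (Bᵀ * Ps * Z₁₂).trace := by
    rw [← Matrix.mul_assoc, Matrix.trace_mul_comm, Matrix.mul_assoc]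
  have e3 : (R * (K * Z₁₁ * Kᵀ)).trace = (Kᵀ * R * K * Z₁₁).trace := by
    rw [← Matrix.mul_assoc, Matrix.trace_mul_comm]; simp only [Matrix.mul_assoc]
  have e4 : (R * (K * Z₁₂)).trace = (Bᵀ * Ps * Z₁₂).trace := by
    rw [← Matrix.mul_assoc, hRK]
  have e5 : (R * (Z₁₂ᵀ * Kᵀ)).trace = (Ps * (B * Z₁₂ᵀ)).trace := by
    rw [← Matrix.mul_assoc, Matrix.trace_mul_comm, ← Matrix.mul_assoc, hKR, Matrix.mul_assoc]
  rw [hM] at htr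
  simp only [Matrix.mul_add, Matrix.trace_add, e3, e4, e5] at htr
  rw [e1, e2, ← Matrix.mul_assoc Ps F] at hf
  rw [hQW]
  simp only [Matrix.sub_mul, Matrix.trace_sub]
  linarith
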